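/- The linear map φ : WSym → ℬ defined on the basis by φ(M_π) = b_π is injective and is a morphism of bialgebras: φ(M_π · M_{π'}) = φ(M_π) ⋆ φ(M_{π'}) for all set partitions π, π'; (φ ⊗ φ)(Δ_WSym(M_π)) = Δ(φ(M_π)) for every set partition π; φ sends M_∅ to the empty B-diagram ε; and ε* ∘ φ equals the counit of WSym. Consequently the span ℬ¹₁ of {b_π : π a set partition} is a sub-bialgebra of ℬ isomorphic as a Hopf algebra to WSym. -/

import Mathlib

open scoped BigOperators

structure BD where
  lam : List ℕ
  up : Finset ℕ
  dn : Finset ℕ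
  ed : Finset (ℕ × ℕ)
deriving DecidableEq

namespace BD

/-- number of vertices -/
def nv (G : BD) : ℕ := G.lam.length

/-- number of half-edges -/
def omega (G : BD) : ℕ := G.lam.sum

/-- the vertex to which a half-edge belongs -/
def v (G : BD) (k : ℕ) : ℕ :=
  (List.range G.lam.length).countP (fun i => (G.lam.take i).sum < k)

def Valid (G : BD) : Prop :=
  (∀ x ∈ G.lam, 0 < x) ∧
  G.up ⊆ Finset.Icc 1 G.omega ∧
  G.dn ⊆ Finset.Icc 1 G.omega ∧
  (∀ p ∈ G.ed, p.1 ∈ G.up ∧ p.2 ∈ G.dn ∧ G.v p.1 < G.v p.2) ∧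
  (∀ p ∈ G.ed, ∀ q ∈ G.ed, p.1 = q.1 → p = q) ∧
  (∀ p ∈ G.ed, ∀ q ∈ G.ed, p.2 = q.2 → p = q)

def eps : BD := ⟨[], ∅, ∅, ∅⟩

theorem eps_valid : eps.Valid := by
  refine ⟨?_, ?_, ?_, ?_, ?_, ?_⟩ <;> simp [eps, Valid, omega]

def HfUp (G : BD) : Finset ℕ := G.up \ G.ed.image Prod.fst
def HfDn (G : BD) : Finset ℕ := G.dn \ G.ed.image Prod.snd
def hfUp (G : BD) : ℕ := G.HfUp.card
def hfDn (G : BD) : ℕ := G.HfDn.card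
def hc (G : BD) : ℕ :=
  (G.omega - G.ed.card - G.hfUp) + (G.omega - G.ed.card - G.hfDn)

/-- composition of `G'` over `G` along a matching `s` -/
def comp (G G' : BD) (s : Finset (ℕ × ℕ)) : BD where
  lam := G.lam ++ G'.lam
  up := G.up ∪ G'.up.image (· + G.omega)
  dn := G.dn ∪ G'.dn.image (· + G.omega)
  ed := G.ed ∪ s.image (fun p => (p.1, p.2 + G.omega)) ∪
        G'.ed.image (fun p => (p.1 + G.omega, p.2 + G.omega))

/-- `s` encodes a strictly increasing sequence `a₁ < ⋯ < a_k` of elements of `H_f↑(G)`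
matched with pairwise distinct elements `b₁,…,b_k` of `H_f↓(G')`. -/
def Matching (G G' : BD) (s : Finset (ℕ × ℕ)) : Prop :=
  (∀ p ∈ s, p.1 ∈ G.HfUp ∧ p.2 ∈ G'.HfDn) ∧
  (∀ p ∈ s, ∀ q ∈ s, p.1 = q.1 → p = q) ∧
  (∀ p ∈ s, ∀ q ∈ s, p.2 = q.2 → p = q)

open scoped Classical in
noncomputable def matchings (G G' : BD) : Finset (Finset (ℕ × ℕ)) :=
  (G.HfUp ×ˢ G'.HfDn).powerset.filter (fun s => Matching G G' s)

/-- juxtaposition -/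
def juxt (G G' : BD) : BD := comp G G' ∅

def Indiv (G : BD) : Prop :=
  ∀ G₁ G₂ : BD, G₁.Valid → G₂.Valid → G = juxt G₁ G₂ → G₁ = G ∨ G₂ = G

/-- half-edges attached to the vertices in `I` -/
def HI (G : BD) (I : Finset ℕ) : Finset ℕ :=
  (Finset.Icc 1 G.omega).filter (fun k => G.v k ∈ I)

/-- the increasing relabelling bijection -/
def phi (G : BD) (I : Finset ℕ) (k : ℕ) : ℕ := ((G.HI I).filter (· ≤ k)).card

/-- sub-B-diagram on the set of vertices `I` -/
def sub (G : BD) (I : Finset ℕ) : BD where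
  lam := ((List.range G.lam.length).filter (fun i => i + 1 ∈ I)).map (fun i => G.lam.getD i 0)
  up := (G.up ∩ G.HI I).image (G.phi I)
  dn := (G.dn ∩ G.HI I).image (G.phi I)
  ed := (G.ed.filter (fun p => G.v p.1 ∈ I ∧ G.v p.2 ∈ I)).image
          (fun p => (G.phi I p.1, G.phi I p.2))

def Isolated (G : BD) (I : Finset ℕ) : Prop :=
  ∀ p ∈ G.ed, (G.v p.1 ∈ I ↔ G.v p.2 ∈ I)

def Connected (G : BD) : Prop :=
  ∀ i j : ℕ, 1 ≤ i → i < j → j ≤ G.nv →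
    ∃ (k : ℕ) (c : Fin (k + 1) → ℕ × ℕ),
      (∀ ℓ, c ℓ ∈ G.ed) ∧
      (i = G.v (c 0).1 ∨ i = G.v (c 0).2) ∧
      (j = G.v (c (Fin.last k)).1 ∨ j = G.v (c (Fin.last k)).2) ∧
      ∀ ℓ : Fin k,
        G.v (c ℓ.castSucc).1 = G.v (c ℓ.succ).1 ∨ G.v (c ℓ.castSucc).1 = G.v (c ℓ.succ).2 ∨
        G.v (c ℓ.castSucc).2 = G.v (c ℓ.succ).1 ∨ G.v (c ℓ.castSucc).2 = G.v (c ℓ.succ).2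

def IsConnComp (G : BD) (I : Finset ℕ) : Prop :=
  I ⊆ Finset.Icc 1 G.nv ∧ I.Nonempty ∧ (G.sub I).Connected ∧
  ∀ J : Finset ℕ, I ⊆ J → J ⊆ Finset.Icc 1 G.nv → (G.sub J).Connected → J = I

end BD

open scoped TensorProduct

/-- B-diagrams -/
abbrev BDiagram := {G : BD // G.Valid}

/-- the free `ℂ`-vector space on the set of B-diagrams -/
abbrev BSpace := BDiagram →₀ ℂ

open scoped Classical in
noncomputable def mkB (G : BD) : BSpace :=
  if h : G.Valid then Finsupp.single ⟨G, h⟩ 1 else 0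

noncomputable def unitB : BSpace := Finsupp.single ⟨BD.eps, BD.eps_valid⟩ 1

noncomputable def liftB {V : Type*} [AddCommMonoid V] [Module ℂ V] (f : BDiagram → V) :
    BSpace →ₗ[ℂ] V :=
  Finsupp.lsum ℂ fun A => LinearMap.toSpanSingleton ℂ V (f A)

noncomputable def mulfun (A B : BDiagram) : BSpace :=
  ∑ s ∈ BD.matchings A.1 B.1, mkB (BD.comp A.1 B.1 s)

/-- the product ⋆ of the algebra of B-diagrams, as a bilinear map -/
noncomputable def starB : BSpace →ₗ[ℂ] BSpace →ₗ[ℂ] BSpace :=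
  liftB fun A => liftB fun B => mulfun A B

open scoped Classical in
/-- the coproduct evaluated on a B-diagram -/
noncomputable def dfun (A : BDiagram) : BSpace ⊗[ℂ] BSpace :=
  ∑ I ∈ (Finset.Icc 1 A.1.nv).powerset.filter (fun I => A.1.Isolated I),
    mkB (A.1.sub I) ⊗ₜ[ℂ] mkB (A.1.sub (Finset.Icc 1 A.1.nv \ I))

/-- the coproduct Δ of ℬ -/
noncomputable def deltaL : BSpace →ₗ[ℂ] BSpace ⊗[ℂ] BSpace := liftB dfun

/-- the counit of ℬ -/
noncomputable def counitB : BSpace →ₗ[ℂ] ℂ :=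
  liftB fun A => if A.1 = BD.eps then (1 : ℂ) else 0

/-- set partitions of `{1,…,n}` for some `n` -/
def IsSP (π : Finset (Finset ℕ)) : Prop :=
  ∅ ∉ π ∧ (∀ b ∈ π, ∀ b' ∈ π, b ≠ b' → Disjoint b b') ∧
  ∃ n : ℕ, π.biUnion id = Finset.Icc 1 n

/-- the type of set partitions -/
abbrev SP := {π : Finset (Finset ℕ) // IsSP π}

/-- the underlying space of `WSym`: the free ℂ-vector space on set partitions -/
abbrev WS := SP →₀ ℂ

theorem empty_isSP : IsSP ∅ :=
  ⟨by simp, by simp, 0, by rw [Finset.biUnion_empty]; exact (Finset.Icc_eq_empty (by norm_num)).symm⟩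

/-- the integer `n` such that `π ⊨ n` -/
def spn (π : Finset (Finset ℕ)) : ℕ := (π.biUnion id).card

def shiftSP (n : ℕ) (π : Finset (Finset ℕ)) : Finset (Finset ℕ) :=
  π.image fun b => b.image (· + n)

/-- `π ⊎ π'` -/
def uplusSP (π π' : Finset (Finset ℕ)) : Finset (Finset ℕ) := π ∪ shiftSP (spn π) π'

/-- indivisible set partitions -/
def IndivSP (π : Finset (Finset ℕ)) : Prop :=
  π ≠ ∅ ∧ ∀ π₁ π₂ : Finset (Finset ℕ), IsSP π₁ → IsSP π₂ → π = uplusSP π₁ π₂ →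
    π₁ = π ∨ π₂ = π

/-- a partial matching between the blocks of `π` and those of `πs` -/
def MatchSP (π πs : Finset (Finset ℕ)) (m : Finset (Finset ℕ × Finset ℕ)) : Prop :=
  (∀ p ∈ m, p.1 ∈ π ∧ p.2 ∈ πs) ∧
  (∀ p ∈ m, ∀ q ∈ m, (p.1 = q.1 ∨ p.2 = q.2) → p = q)

open scoped Classical in
noncomputable def matchingsSP (π πs : Finset (Finset ℕ)) :
    Finset (Finset (Finset ℕ × Finset ℕ)) :=
  (π ×ˢ πs).powerset.filter fun m => MatchSP π πs m

/-- merge the matched pairs of blocks -/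
def mergeSP (π πs : Finset (Finset ℕ)) (m : Finset (Finset ℕ × Finset ℕ)) :
    Finset (Finset ℕ) :=
  ((π \ m.image Prod.fst) ∪ (πs \ m.image Prod.snd)) ∪ m.image fun p => p.1 ∪ p.2

open scoped Classical in
noncomputable def mkSP (π : Finset (Finset ℕ)) : WS :=
  if h : IsSP π then Finsupp.single ⟨π, h⟩ 1 else 0

noncomputable def unitW : WS := Finsupp.single ⟨∅, empty_isSP⟩ 1

noncomputable def liftW {V : Type*} [AddCommMonoid V] [Module ℂ V] (f : SP → V) :
    WS →ₗ[ℂ] V :=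
  Finsupp.lsum ℂ fun π => LinearMap.toSpanSingleton ℂ V (f π)

/-- `M_π · M_π'`: the sum over all ways of merging blocks of `π` with blocks of the
shifted `π'` along a partial matching -/
noncomputable def mulfunSP (π π' : SP) : WS :=
  ∑ m ∈ matchingsSP π.1 (shiftSP (spn π.1) π'.1),
    mkSP (mergeSP π.1 (shiftSP (spn π.1) π'.1) m)

/-- the product of `WSym` -/
noncomputable def mulW : WS →ₗ[ℂ] WS →ₗ[ℂ] WS := liftW fun π => liftW fun π' => mulfunSP π π'

/-- standardization of a set of blocks -/
def stdSP (e : Finset (Finset ℕ)) : Finset (Finset ℕ) :=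
  e.image fun b => b.image fun x => ((e.biUnion id).filter (· ≤ x)).card

open scoped Classical in
noncomputable def dfunSP (π : SP) : WS ⊗[ℂ] WS :=
  ∑ e ∈ π.1.powerset, mkSP (stdSP e) ⊗ₜ[ℂ] mkSP (stdSP (π.1 \ e))

/-- the coproduct of `WSym` -/
noncomputable def deltaW : WS →ₗ[ℂ] WS ⊗[ℂ] WS := liftW dfunSP

/-- the counit of `WSym` -/
noncomputable def counitW : WS →ₗ[ℂ] ℂ := liftW fun π => if π.1 = ∅ then (1 : ℂ) else 0

open scoped Classical in
/-- the B-diagram `b_π` associated to a set partition `π` of `{1,…,n}`: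
`n` vertices with one inner and one outer half-edge, with an edge `(i,j)` whenever
`i, j` lie in a common block `b` and `j = min{ℓ ∈ b : ℓ > i}`. -/
noncomputable def bofSP (π : Finset (Finset ℕ)) : BD :=
  ⟨List.replicate (π.biUnion id).card 1,
   Finset.Icc 1 (π.biUnion id).card,
   Finset.Icc 1 (π.biUnion id).card,
   (Finset.Icc 1 (π.biUnion id).card ×ˢ Finset.Icc 1 (π.biUnion id).card).filter
     fun p => ∃ b ∈ π, p.1 ∈ b ∧ p.2 ∈ b ∧ (b.filter fun l => p.1 < l).min = (p.2 : WithTop ℕ)⟩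

/-- the linear map `WSym → ℬ` sending `M_π` to `b_π` -/
noncomputable def phiW : WS →ₗ[ℂ] BSpace := liftW fun π => mkB (bofSP π.1)


def AdjP (π : Finset (Finset ℕ)) (i j : ℕ) : Prop :=
  ∃ b ∈ π, i ∈ b ∧ j ∈ b ∧ i < j ∧ ∀ l ∈ b, i < l → j ≤ l

theorem min_iff (b : Finset ℕ) (i j : ℕ) :
    (b.filter fun l => i < l).min = (j : WithTop ℕ) ↔
      (j ∈ b ∧ i < j ∧ ∀ l ∈ b, i < l → j ≤ l) := by
  constructor
  · intro h
    have h1 := Finset.mem_of_min h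
    rw [Finset.mem_filter] at h1
    refine ⟨h1.1, h1.2, fun l hl hil => ?_⟩
    exact Finset.min_le_of_eq (Finset.mem_filter.2 ⟨hl, hil⟩) h
  · rintro ⟨h1, h2, h3⟩
    apply le_antisymm
    · exact Finset.min_le (Finset.mem_filter.2 ⟨h1, h2⟩)
    · apply Finset.le_min
      intro l hl
      rw [Finset.mem_filter] at hl
      exact WithTop.coe_le_coe.2 (h3 l hl.1 hl.2)

theorem sp_union {π : Finset (Finset ℕ)} (h : IsSP π) : π.biUnion id = Finset.Icc 1 (spn π) := by
  obtain ⟨_, _, n, hn⟩ := h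
  have : spn π = n := by simp [spn, hn]
  rw [this, hn]

theorem sp_mem {π : Finset (Finset ℕ)} (h : IsSP π) {b : Finset ℕ} (hb : b ∈ π) {x : ℕ}
    (hx : x ∈ b) : 1 ≤ x ∧ x ≤ spn π := by
  have : x ∈ π.biUnion id := Finset.mem_biUnion.2 ⟨b, hb, hx⟩
  rw [sp_union h] at this
  simpa using this

theorem sp_ex {π : Finset (Finset ℕ)} (h : IsSP π) {x : ℕ} (h1 : 1 ≤ x) (h2 : x ≤ spn π) :
    ∃ b ∈ π, x ∈ b := by
  have : x ∈ π.biUnion id := by rw [sp_union h]; simp [h1, h2]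
  simpa using this

theorem sp_eq {π : Finset (Finset ℕ)} (h : IsSP π) {b c : Finset ℕ} (hb : b ∈ π) (hc : c ∈ π)
    {x : ℕ} (hx : x ∈ b) (hx' : x ∈ c) : b = c := by
  by_contra hne
  exact Finset.disjoint_left.1 (h.2.1 b hb c hc hne) hx hx'

theorem sp_ne {π : Finset (Finset ℕ)} (h : IsSP π) {b : Finset ℕ} (hb : b ∈ π) : b.Nonempty := by
  rw [Finset.nonempty_iff_ne_empty]
  rintro rfl
  exact h.1 hb

theorem isSP_of {π : Finset (Finset ℕ)} (n : ℕ) (h0 : ∀ b ∈ π, b.Nonempty)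
    (h1 : ∀ b ∈ π, ∀ c ∈ π, ∀ x, x ∈ b → x ∈ c → b = c)
    (h2 : ∀ x, (∃ b ∈ π, x ∈ b) ↔ 1 ≤ x ∧ x ≤ n) : IsSP π := by
  refine ⟨fun h => by simpa using h0 _ h, fun b hb c hc hne => ?_, n, ?_⟩
  · rw [Finset.disjoint_left]
    intro x hx hx'
    exact hne (h1 b hb c hc x hx hx')
  · ext x
    simpa using h2 x

theorem spn_of {π : Finset (Finset ℕ)} (n : ℕ) 
    (h2 : ∀ x, (∃ b ∈ π, x ∈ b) ↔ 1 ≤ x ∧ x ≤ n) : spn π = n := by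
  have : π.biUnion id = Finset.Icc 1 n := by
    ext x
    simpa using h2 x
  simp [spn, this]

theorem bof_ed {π : Finset (Finset ℕ)} (h : IsSP π) (p : ℕ × ℕ) :
    p ∈ (bofSP π).ed ↔ AdjP π p.1 p.2 := by
  classical
  unfold bofSP AdjP
  simp only [Finset.mem_filter, Finset.mem_product, min_iff]
  constructor
  · rintro ⟨_, b, hb, h1, _, h3⟩
    exact ⟨b, hb, h1, h3⟩
  · rintro ⟨b, hb, h1, h2, h3⟩
    have e1 := sp_mem h hb h1
    have e2 := sp_mem h hb h2
    refine ⟨⟨?_, ?_⟩, b, hb, h1, h2, h2, h3⟩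
    · exact Finset.mem_Icc.2 e1
    · exact Finset.mem_Icc.2 e2

theorem bof_lam (π : Finset (Finset ℕ)) : (bofSP π).lam = List.replicate (spn π) 1 := rfl
theorem bof_up (π : Finset (Finset ℕ)) : (bofSP π).up = Finset.Icc 1 (spn π) := rfl
theorem bof_dn (π : Finset (Finset ℕ)) : (bofSP π).dn = Finset.Icc 1 (spn π) := rfl
theorem bof_omega (π : Finset (Finset ℕ)) : (bofSP π).omega = spn π := by
  simp [BD.omega, bof_lam]
theorem bof_nv (π : Finset (Finset ℕ)) : (bofSP π).nv = spn π := by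
  simp [BD.nv, bof_lam]

theorem countP_lt (n k : ℕ) : (List.range n).countP (fun i => decide (i < k)) = min n k := by
  induction n with
  | zero => simp
  | succ n ih =>
    rw [List.range_succ, List.countP_append, ih]
    by_cases h : n < k <;> simp [h] <;> omega

theorem bof_v (π : Finset (Finset ℕ)) (k : ℕ) : (bofSP π).v k = min (spn π) k := by
  unfold BD.v
  rw [bof_lam, ← countP_lt, List.length_replicate]
  apply List.countP_congr
  intro i hi
  rw [List.mem_range] at hi
  simp [List.take_replicate, min_eq_left hi.le]

theorem AdjP.right_unique {π : Finset (Finset ℕ)} (h : IsSP π) {i j k : ℕ} (h1 : AdjP π i j)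
    (h2 : AdjP π i k) : j = k := by
  obtain ⟨b, hb, hi, hj, hij, hl⟩ := h1
  obtain ⟨c, hc, hi', hk, hik, hl'⟩ := h2
  obtain rfl := sp_eq h hb hc hi hi'
  exact le_antisymm (hl _ hk hik) (hl' _ hj hij)

theorem AdjP.left_unique {π : Finset (Finset ℕ)} (h : IsSP π) {i j k : ℕ} (h1 : AdjP π i k)
    (h2 : AdjP π j k) : i = j := by
  obtain ⟨b, hb, hi, hj, hij, hl⟩ := h1
  obtain ⟨c, hc, hi', hk, hik, hl'⟩ := h2
  obtain rfl := sp_eq h hb hc hj hk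
  by_contra hne
  rcases Nat.lt_or_gt_of_ne hne with h3 | h3
  · have := hl _ hi' h3; omega
  · have := hl' _ hi h3; omega

theorem bof_valid {π : Finset (Finset ℕ)} (h : IsSP π) : (bofSP π).Valid := by
  refine ⟨?_, ?_, ?_, ?_, ?_, ?_⟩
  · intro x hx
    rw [bof_lam] at hx
    rw [List.eq_of_mem_replicate hx]; norm_num
  · rw [bof_up, bof_omega]
  · rw [bof_dn, bof_omega]
  · intro p hp
    rw [bof_ed h] at hp
    obtain ⟨b, hb, h1, h2, h3, _⟩ := hp
    have e1 := sp_mem h hb h1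
    have e2 := sp_mem h hb h2
    rw [bof_up, bof_dn, bof_v, bof_v, Finset.mem_Icc, Finset.mem_Icc]
    omega
  · intro p hp q hq hpq
    rw [bof_ed h] at hp hq
    rw [← hpq] at hq
    exact Prod.ext hpq (hp.right_unique h hq)
  · intro p hp q hq hpq
    rw [bof_ed h] at hp hq
    rw [← hpq] at hq
    exact Prod.ext (hp.left_unique h hq) hpq

theorem chain_of_block {π : Finset (Finset ℕ)} {b : Finset ℕ} (hb : b ∈ π) (d : ℕ) :
    ∀ i j : ℕ, j - i ≤ d → i ∈ b → j ∈ b → i ≤ j → Relation.ReflTransGen (AdjP π) i j := by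
  induction d with
  | zero =>
    intro i j hd hi hj hij
    obtain rfl : i = j := by omega
    exact .refl
  | succ d ih =>
    intro i j hd hi hj hij
    rcases hij.eq_or_lt with rfl | hlt
    · exact .refl
    · have hne : (b.filter fun l => i < l).Nonempty := ⟨j, by simp [hj, hlt]⟩
      obtain ⟨k, hk⟩ := Finset.min_of_nonempty hne
      have hk := (min_iff b i k).1 hk
      have hkj := hk.2.2 j hj hlt
      exact .head ⟨b, hb, hi, hk⟩ (ih k j (by omega) hk.1 hj hkj)

theorem chain_block {π : Finset (Finset ℕ)} (h : IsSP π) {i j : ℕ}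
    (hc : Relation.ReflTransGen (AdjP π) i j) : ∀ b ∈ π, i ∈ b → j ∈ b := by
  intro b hb hi
  induction hc with
  | refl => exact hi
  | tail _ h2 ih =>
    obtain ⟨c, hc, h3, h4, _⟩ := h2
    rw [sp_eq h hb hc ih h3]; exact h4

theorem chain_block' {π : Finset (Finset ℕ)} (h : IsSP π) {i j : ℕ}
    (hc : Relation.ReflTransGen (AdjP π) i j) : ∀ b ∈ π, j ∈ b → i ∈ b := by
  intro b hb hi
  induction hc with
  | refl => exact hi
  | tail _ h2 ih =>
    obtain ⟨c, hc, h3, h4, _⟩ := h2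
    apply ih
    rw [sp_eq h hb hc hi h4]; exact h3

theorem bof_inj_aux {π π' : Finset (Finset ℕ)} (h : IsSP π) (h' : IsSP π')
    (he : bofSP π = bofSP π') : π ⊆ π' := by
  have hn : spn π = spn π' := by rw [← bof_omega, he, bof_omega]
  have hA : AdjP π = AdjP π' := by
    ext i j
    rw [← bof_ed h (i, j), he, bof_ed h']
  intro b hb
  obtain ⟨x, hx⟩ := sp_ne h hb
  have hx1 := sp_mem h hb hx
  obtain ⟨c, hc, hxc⟩ := sp_ex h' hx1.1 (hn ▸ hx1.2)
  have : b = c := by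
    ext y
    constructor
    · intro hy
      rcases le_total x y with hxy | hxy
      · exact chain_block h' (hA ▸ chain_of_block hb _ x y le_rfl hx hy hxy) c hc hxc
      · exact chain_block' h' (hA ▸ chain_of_block hb _ y x le_rfl hy hx hxy) c hc hxc
    · intro hy
      rcases le_total x y with hxy | hxy
      · exact chain_block h (hA ▸ chain_of_block hc _ x y le_rfl hxc hy hxy) b hb hx
      · exact chain_block' h (hA ▸ chain_of_block hc _ y x le_rfl hy hxc hxy) b hb hx
  rw [this]; exact hc

theorem bof_inj {π π' : Finset (Finset ℕ)} (h : IsSP π) (h' : IsSP π')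
    (he : bofSP π = bofSP π') : π = π' :=
  (bof_inj_aux h h' he).antisymm (bof_inj_aux h' h he.symm)

noncomputable def bD (π : SP) : BDiagram := ⟨bofSP π.1, bof_valid π.2⟩

theorem mkB_bof (π : SP) : mkB (bofSP π.1) = Finsupp.single (bD π) 1 := by
  rw [mkB, dif_pos (bof_valid π.2)]; rfl

theorem liftB_single {V : Type*} [AddCommMonoid V] [Module ℂ V] (f : BDiagram → V) (A : BDiagram) :
    liftB f (Finsupp.single A 1) = f A := by
  simp [liftB]

theorem liftW_single {V : Type*} [AddCommMonoid V] [Module ℂ V] (f : SP → V) (A : SP) :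
    liftW f (Finsupp.single A 1) = f A := by
  simp [liftW]

theorem phiW_single (π : SP) : phiW (Finsupp.single π 1) = Finsupp.single (bD π) 1 := by
  rw [phiW, liftW_single, mkB_bof]

theorem phiW_mk {π : Finset (Finset ℕ)} (h : IsSP π) : phiW (mkSP π) = mkB (bofSP π) := by
  rw [mkSP, dif_pos h, phiW_single, ← mkB_bof]

theorem phiW_eq : phiW = Finsupp.lmapDomain ℂ ℂ bD := by
  apply Finsupp.lhom_ext'
  intro π
  ext1
  simp only [LinearMap.comp_apply, Finsupp.lsingle_apply, phiW_single]
  simp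

theorem phiW_inj : Function.Injective phiW := by
  rw [phiW_eq]
  apply Finsupp.mapDomain_injective
  intro π π' h
  exact Subtype.ext (bof_inj π.2 π'.2 (congrArg Subtype.val h))

theorem bof_eps_iff (π : SP) : bofSP π.1 = BD.eps ↔ π.1 = ∅ := by
  have h0 : bofSP ∅ = BD.eps := by
    simp [bofSP, BD.eps]
  rw [← h0]
  exact ⟨fun h => bof_inj π.2 empty_isSP h, fun h => by rw [h]⟩

theorem phiW_unit : phiW unitW = unitB := by
  rw [unitW, phiW_single, unitB]
  exact congrArg (fun z : BDiagram => (Finsupp.single z 1 : BSpace))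
    (Subtype.ext ((bof_eps_iff ⟨∅, empty_isSP⟩).2 rfl))

theorem phiW_counit (u : WS) : counitB (phiW u) = counitW u := by
  have : counitB ∘ₗ phiW = counitW := by
    apply Finsupp.lhom_ext'
    intro π
    ext1
    simp only [LinearMap.comp_apply, Finsupp.lsingle_apply, phiW_single]
    rw [counitB, counitW, liftB_single, liftW_single]
    simp [bD, bof_eps_iff]
  exact LinearMap.congr_fun this u

theorem phiW_range :
    LinearMap.range phiW = Submodule.span ℂ {x : BSpace | ∃ π : SP, x = mkB (bofSP π.1)} := by
  apply le_antisymm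
  · rintro _ ⟨u, rfl⟩
    induction u using Finsupp.induction_linear with
    | zero => simp
    | add f g hf hg => rw [map_add]; exact add_mem hf hg
    | single π c =>
      have : (Finsupp.single π c : WS) = c • Finsupp.single π 1 := by simp
      rw [this, map_smul, phiW_single, ← mkB_bof]
      exact Submodule.smul_mem _ _ (Submodule.subset_span ⟨π, rfl⟩)
  · rw [Submodule.span_le]
    rintro _ ⟨π, rfl⟩
    exact ⟨Finsupp.single π 1, by rw [phiW_single, mkB_bof]⟩

theorem rk_lt {U : Finset ℕ} {x y : ℕ} (h : x < y) (hy : y ∈ U) :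
    (U.filter (· ≤ x)).card < (U.filter (· ≤ y)).card := by
  apply Finset.card_lt_card
  rw [Finset.ssubset_iff_of_subset]
  · exact ⟨y, by simp [hy], by simp [h]⟩
  · intro z hz
    simp only [Finset.mem_filter] at hz ⊢
    exact ⟨hz.1, by omega⟩

theorem rk_lt_iff {U : Finset ℕ} {x y : ℕ} (hx : x ∈ U) (hy : y ∈ U) :
    (U.filter (· ≤ x)).card < (U.filter (· ≤ y)).card ↔ x < y := by
  constructor
  · intro h
    by_contra hc
    rcases (not_lt.1 hc).eq_or_lt with rfl | h2
    · omega
    · have := rk_lt h2 hx; omega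
  · intro h; exact rk_lt h hy

theorem rk_inj {U : Finset ℕ} {x y : ℕ} (hx : x ∈ U) (hy : y ∈ U)
    (h : (U.filter (· ≤ x)).card = (U.filter (· ≤ y)).card) : x = y := by
  have h1 := rk_lt_iff hx hy
  have h2 := rk_lt_iff hy hx
  omega

theorem rk_image (U : Finset ℕ) :
    U.image (fun x => (U.filter (· ≤ x)).card) = Finset.Icc 1 U.card := by
  apply Finset.eq_of_subset_of_card_le
  · intro k hk
    obtain ⟨x, hx, rfl⟩ := Finset.mem_image.1 hk
    rw [Finset.mem_Icc]
    refine ⟨Finset.card_pos.2 ⟨x, by simp [hx]⟩, Finset.card_le_card (Finset.filter_subset _ _)⟩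
  · rw [Finset.card_image_of_injOn]
    · simp
    · intro x hx y hy h
      exact rk_inj hx hy h

section cop
variable {π : Finset (Finset ℕ)} (h : IsSP π) {e : Finset (Finset ℕ)} (he : e ⊆ π)

theorem std_cover (e : Finset (Finset ℕ)) (x : ℕ) :
    (∃ b ∈ stdSP e, x ∈ b) ↔ 1 ≤ x ∧ x ≤ (e.biUnion id).card := by
  rw [← Finset.mem_Icc, ← rk_image]
  simp only [stdSP, Finset.mem_image, Finset.mem_biUnion, id]
  constructor
  · rintro ⟨_, ⟨b, hb, rfl⟩, hx⟩
    obtain ⟨y, hy, rfl⟩ := Finset.mem_image.1 hx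
    exact ⟨y, ⟨b, hb, hy⟩, rfl⟩
  · rintro ⟨y, ⟨b, hb, hy⟩, rfl⟩
    exact ⟨_, ⟨b, hb, rfl⟩, Finset.mem_image.2 ⟨y, hy, rfl⟩⟩

theorem std_spn (e : Finset (Finset ℕ)) : spn (stdSP e) = (e.biUnion id).card :=
  spn_of _ (std_cover e)

theorem mem_U {b : Finset ℕ} (hb : b ∈ e) {x : ℕ} (hx : x ∈ b) : x ∈ e.biUnion id :=
  Finset.mem_biUnion.2 ⟨b, hb, hx⟩

theorem U_mem {b : Finset ℕ} (h : IsSP π) (he : e ⊆ π) (hb : b ∈ π) {x : ℕ} (hx : x ∈ b)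
    (hU : x ∈ e.biUnion id) : b ∈ e := by
  obtain ⟨c, hc, hxc⟩ := Finset.mem_biUnion.1 hU
  rw [sp_eq h hb (he hc) hx hxc]; exact hc

theorem std_isSP (h : IsSP π) (he : e ⊆ π) : IsSP (stdSP e) := by
  refine isSP_of _ ?_ ?_ (std_cover e)
  · intro b hb
    obtain ⟨c, hc, rfl⟩ := Finset.mem_image.1 hb
    exact (sp_ne h (he hc)).image _
  · intro b hb c hc x hxb hxc
    obtain ⟨b, hb₁, rfl⟩ := Finset.mem_image.1 hb
    obtain ⟨c, hc₁, rfl⟩ := Finset.mem_image.1 hc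
    obtain ⟨y, hy, rfl⟩ := Finset.mem_image.1 hxb
    obtain ⟨z, hz, hyz⟩ := Finset.mem_image.1 hxc
    have := rk_inj (mem_U hc₁ hz) (mem_U hb₁ hy) hyz
    subst this
    rw [sp_eq h (he hb₁) (he hc₁) hy hz]

theorem std_adj (h : IsSP π) (he : e ⊆ π) (i j : ℕ) :
    AdjP (stdSP e) i j ↔ ∃ x y, AdjP π x y ∧ x ∈ e.biUnion id ∧ y ∈ e.biUnion id ∧
      ((e.biUnion id).filter (· ≤ x)).card = i ∧ ((e.biUnion id).filter (· ≤ y)).card = j := by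
  constructor
  · rintro ⟨b, hb₀, hi, hj, hij, hl⟩
    obtain ⟨b, hb, rfl⟩ := Finset.mem_image.1 hb₀
    obtain ⟨x, hx, rfl⟩ := Finset.mem_image.1 hi
    obtain ⟨y, hy, rfl⟩ := Finset.mem_image.1 hj
    have hxU := mem_U hb hx
    have hyU := mem_U hb hy
    refine ⟨x, y, ⟨b, he hb, hx, hy, (rk_lt_iff hxU hyU).1 hij, ?_⟩, hxU, hyU, rfl, rfl⟩
    intro l hlb hxl
    have := hl _ (Finset.mem_image.2 ⟨l, hlb, rfl⟩) (rk_lt hxl (mem_U hb hlb))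
    have h2 := rk_lt_iff (mem_U hb hlb) hyU
    by_contra hc
    have := h2.2 (not_le.1 hc)
    omega
  · rintro ⟨x, y, ⟨b, hb, hx, hy, hxy, hl⟩, hxU, hyU, rfl, rfl⟩
    have hb := U_mem h he hb hx hxU
    refine ⟨_, Finset.mem_image.2 ⟨b, hb, rfl⟩, Finset.mem_image.2 ⟨x, hx, rfl⟩,
      Finset.mem_image.2 ⟨y, hy, rfl⟩, rk_lt hxy hyU, ?_⟩
    intro l hlb hxl
    obtain ⟨z, hz, rfl⟩ := Finset.mem_image.1 hlb
    have hzU := mem_U hb hz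
    have := hl z hz ((rk_lt_iff hxU hzU).1 hxl)
    by_contra hc
    have := (rk_lt_iff hzU hyU).1 (not_le.1 hc)
    omega

theorem U_sub (h : IsSP π) (he : e ⊆ π) : e.biUnion id ⊆ Finset.Icc 1 (spn π) := by
  rw [← sp_union h]
  exact Finset.biUnion_subset_biUnion_of_subset_left _ he

theorem HI_bof {I : Finset ℕ} (hI : I ⊆ Finset.Icc 1 (spn π)) : (bofSP π).HI I = I := by
  ext k
  unfold BD.HI
  rw [Finset.mem_filter, bof_omega, bof_v, Finset.mem_Icc]
  constructor
  · rintro ⟨h1, h2⟩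
    rwa [min_eq_right h1.2] at h2
  · intro hk
    have := Finset.mem_Icc.1 (hI hk)
    rw [min_eq_right this.2]
    exact ⟨this, hk⟩

theorem sub_lam {n : ℕ} {I : Finset ℕ} (hI : I ⊆ Finset.Icc 1 n) :
    ((List.range n).filter (fun i => i + 1 ∈ I)).map (fun i => (List.replicate n 1).getD i 0) =
      List.replicate I.card 1 := by
  rw [List.eq_replicate_iff]
  constructor
  · rw [List.length_map]
    have h1 : ((List.range n).filter (fun i => i + 1 ∈ I)).length =
        ((Finset.range n).filter (fun i => i + 1 ∈ I)).card := rfl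
    rw [h1]
    apply Finset.card_nbij' (fun i => i + 1) (fun i => i - 1)
    · intro i hi
      exact (Finset.mem_filter.1 hi).2
    · intro i hi
      have := Finset.mem_Icc.1 (hI hi)
      simp only [Finset.coe_filter, Finset.mem_range, Set.mem_ofPred_eq]
      rw [Nat.sub_add_cancel this.1]
      exact ⟨by omega, hi⟩
    · intro i hi
      simp
    · intro i hi
      have := Finset.mem_Icc.1 (hI hi)
      show i - 1 + 1 = i
      omega
  · intro x hx
    obtain ⟨i, hi, rfl⟩ := List.mem_map.1 hx
    have := List.mem_range.1 (List.mem_filter.1 hi).1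
    simp [this]

theorem sub_bof (h : IsSP π) (he : e ⊆ π) :
    (bofSP π).sub (e.biUnion id) = bofSP (stdSP e) := by
  have hU := U_sub h he
  have hphi : (bofSP π).phi (e.biUnion id) = fun x => ((e.biUnion id).filter (· ≤ x)).card := by
    funext k
    unfold BD.phi
    rw [HI_bof hU]
  have hlam : ((bofSP π).sub (e.biUnion id)).lam = (bofSP (stdSP e)).lam := by
    rw [bof_lam, std_spn]
    show ((List.range (bofSP π).lam.length).filter (fun i => decide (i + 1 ∈ e.biUnion id))).map
      (fun i => (bofSP π).lam.getD i 0) = _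
    rw [bof_lam, List.length_replicate]
    exact sub_lam hU
  have hup : ((bofSP π).sub (e.biUnion id)).up = (bofSP (stdSP e)).up := by
    show ((bofSP π).up ∩ (bofSP π).HI _).image ((bofSP π).phi _) = _
    rw [bof_up, bof_up, HI_bof hU, std_spn, ← rk_image, hphi, Finset.inter_eq_right.2 hU]
  have hed : ((bofSP π).sub (e.biUnion id)).ed = (bofSP (stdSP e)).ed := by
    ext ⟨i, j⟩
    rw [bof_ed (std_isSP h he), std_adj h he]
    show (i, j) ∈ ((bofSP π).ed.filter _).image _ ↔ _
    simp only [Finset.mem_image, Finset.mem_filter, bof_ed h, bof_v, hphi, Prod.exists,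
      Prod.mk.injEq]
    constructor
    · rintro ⟨x, y, ⟨hA, h1, h2⟩, h3, h4⟩
      refine ⟨x, y, hA, ?_, ?_, h3, h4⟩
      · obtain ⟨b, hb, hx, hy, _⟩ := hA
        rwa [min_eq_right (sp_mem h hb hx).2] at h1
      · obtain ⟨b, hb, hx, hy, _⟩ := hA
        rwa [min_eq_right (sp_mem h hb hy).2] at h2
    · rintro ⟨x, y, hA, h1, h2, h3, h4⟩
      refine ⟨x, y, ⟨hA, ?_, ?_⟩, h3, h4⟩
      · rwa [min_eq_right (Finset.mem_Icc.1 (hU h1)).2]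
      · rwa [min_eq_right (Finset.mem_Icc.1 (hU h2)).2]
  have key : ∀ G G' : BD, G.lam = G'.lam → G.up = G'.up → G.dn = G'.dn → G.ed = G'.ed → G = G' := by
    rintro ⟨⟩ ⟨⟩ h1 h2 h3 h4
    simp_all
  exact key _ _ hlam hup hup hed

theorem iso_iff (h : IsSP π) {I : Finset ℕ} (hI : I ⊆ Finset.Icc 1 (spn π)) :
    (bofSP π).Isolated I ↔ ∀ b ∈ π, ∀ x ∈ b, ∀ y ∈ b, x ∈ I → y ∈ I := by
  have h0 : (bofSP π).Isolated I ↔ ∀ x y, AdjP π x y → (x ∈ I ↔ y ∈ I) := by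
    unfold BD.Isolated
    simp only [bof_ed h, bof_v, Prod.forall]
    refine forall_congr' fun x => forall_congr' fun y => imp_congr_right fun hA => ?_
    obtain ⟨b, hb, hx, hy, _⟩ := hA
    rw [min_eq_right (sp_mem h hb hx).2, min_eq_right (sp_mem h hb hy).2]
  rw [h0]
  constructor
  · intro hA b hb x hx y hy hxI
    have key : ∀ x y, Relation.ReflTransGen (AdjP π) x y → (x ∈ I ↔ y ∈ I) := by
      intro x y hc
      induction hc with
      | refl => rfl
      | tail _ h2 ih => rw [ih]; exact hA _ _ h2
    rcases le_total x y with hxy | hxy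
    · exact (key _ _ (chain_of_block hb _ x y le_rfl hx hy hxy)).1 hxI
    · exact (key _ _ (chain_of_block hb _ y x le_rfl hy hx hxy)).2 hxI
  · rintro hB x y ⟨b, hb, hx, hy, _⟩
    exact ⟨hB b hb x hx y hy, hB b hb y hy x hx⟩

theorem U_compl (h : IsSP π) (he : e ⊆ π) :
    (π \ e).biUnion id = Finset.Icc 1 (spn π) \ e.biUnion id := by
  ext x
  constructor
  · intro hx
    obtain ⟨b, hb, hxb⟩ := Finset.mem_biUnion.1 hx
    have hb := Finset.mem_sdiff.1 hb
    refine Finset.mem_sdiff.2 ⟨Finset.mem_Icc.2 (sp_mem h hb.1 hxb), fun hU => hb.2 ?_⟩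
    exact U_mem h he hb.1 hxb hU
  · intro hx
    obtain ⟨h1, h2⟩ := Finset.mem_sdiff.1 hx
    have h1 := Finset.mem_Icc.1 h1
    obtain ⟨b, hb, hxb⟩ := sp_ex h h1.1 h1.2
    exact mem_U (Finset.mem_sdiff.2 ⟨hb, fun hbe => h2 (mem_U hbe hxb)⟩) hxb

theorem cop_single (π : SP) :
    TensorProduct.map phiW phiW (dfunSP π) = dfun (bD π) := by
  classical
  obtain ⟨π, h⟩ := π
  unfold dfunSP dfun
  rw [map_sum]
  refine Finset.sum_bij' (fun e _ => e.biUnion id) (fun I _ => π.filter (· ⊆ I)) ?_ ?_ ?_ ?_ ?_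
  · intro e he
    have he := Finset.mem_powerset.1 he
    have hU := U_sub h he
    rw [Finset.mem_filter, Finset.mem_powerset]
    refine ⟨?_, (iso_iff h hU).2 ?_⟩
    · rw [show (bD ⟨π, h⟩).1.nv = spn π from bof_nv π]; exact hU
    · intro b hb x hx y hy hxU
      exact mem_U (U_mem h he hb hx hxU) hy
  · intro I hI
    exact Finset.mem_powerset.2 (Finset.filter_subset _ _)
  · intro e he
    have he := Finset.mem_powerset.1 he
    ext b
    rw [Finset.mem_filter]
    constructor
    · rintro ⟨hb, hbU⟩
      obtain ⟨x, hx⟩ := sp_ne h hb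
      exact U_mem h he hb hx (hbU hx)
    · intro hb
      exact ⟨he hb, fun x hx => mem_U hb hx⟩
  · intro I hI
    rw [Finset.mem_filter, Finset.mem_powerset,
      show (bD ⟨π, h⟩).1.nv = spn π from bof_nv π] at hI
    have hiso := (iso_iff h hI.1).1 hI.2
    ext x
    constructor
    · intro hx
      obtain ⟨b, hb, hxb⟩ := Finset.mem_biUnion.1 hx
      exact (Finset.mem_filter.1 hb).2 hxb
    · intro hx
      have h1 := Finset.mem_Icc.1 (hI.1 hx)
      obtain ⟨b, hb, hxb⟩ := sp_ex h h1.1 h1.2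
      exact mem_U (Finset.mem_filter.2 ⟨hb, fun y hy => hiso b hb x hxb y hy hx⟩) hxb
  · intro e he
    have he := Finset.mem_powerset.1 he
    have he' : π \ e ⊆ π := Finset.sdiff_subset
    rw [TensorProduct.map_tmul, phiW_mk (std_isSP h he), phiW_mk (std_isSP h he'),
      ← sub_bof h he, ← sub_bof h he', U_compl h he,
      show (bD ⟨π, h⟩).1.nv = spn π from bof_nv π]
    rfl

end cop

theorem phiW_cop (u : WS) : TensorProduct.map phiW phiW (deltaW u) = deltaL (phiW u) := by
  have : TensorProduct.map phiW phiW ∘ₗ deltaW = deltaL ∘ₗ phiW := by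
    apply Finsupp.lhom_ext'
    intro π
    ext1
    simp only [LinearMap.comp_apply, Finsupp.lsingle_apply, phiW_single]
    rw [deltaW, deltaL, liftB_single, liftW_single]
    exact cop_single π
  exact LinearMap.congr_fun this u

theorem mem_shift {n : ℕ} {π : Finset (Finset ℕ)} {c : Finset ℕ} :
    c ∈ shiftSP n π ↔ ∃ b ∈ π, b.image (· + n) = c := by
  simp [shiftSP]

section prod
variable {π π' : Finset (Finset ℕ)}

theorem sh_gt (h' : IsSP π') {n : ℕ} {c : Finset ℕ} (hc : c ∈ shiftSP n π') {x : ℕ} (hx : x ∈ c) :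
    n < x ∧ x ≤ n + spn π' := by
  obtain ⟨b, hb, rfl⟩ := mem_shift.1 hc
  obtain ⟨y, hy, rfl⟩ := Finset.mem_image.1 hx
  have := sp_mem h' hb hy
  omega

theorem sh_ex (h' : IsSP π') {n x : ℕ} (h1 : n < x) (h2 : x ≤ n + spn π') :
    ∃ c ∈ shiftSP n π', x ∈ c := by
  obtain ⟨b, hb, hx⟩ := sp_ex h' (x := x - n) (by omega) (by omega)
  exact ⟨_, mem_shift.2 ⟨b, hb, rfl⟩, Finset.mem_image.2 ⟨_, hx, by omega⟩⟩

theorem sh_eq (h' : IsSP π') {n : ℕ} {b c : Finset ℕ} (hb : b ∈ shiftSP n π')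
    (hc : c ∈ shiftSP n π') {x : ℕ} (hx : x ∈ b) (hx' : x ∈ c) : b = c := by
  obtain ⟨b, hb₁, rfl⟩ := mem_shift.1 hb
  obtain ⟨c, hc₁, rfl⟩ := mem_shift.1 hc
  obtain ⟨y, hy, rfl⟩ := Finset.mem_image.1 hx
  obtain ⟨z, hz, hyz⟩ := Finset.mem_image.1 hx'
  obtain rfl : z = y := by simpa using hyz
  rw [sp_eq h' hb₁ hc₁ hy hz]

theorem sh_ne (h' : IsSP π') {n : ℕ} {b : Finset ℕ} (hb : b ∈ shiftSP n π') : b.Nonempty := by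
  obtain ⟨b, hb₁, rfl⟩ := mem_shift.1 hb
  exact (sp_ne h' hb₁).image _

theorem sh_adj (n i j : ℕ) :
    AdjP (shiftSP n π') i j ↔ ∃ x y, AdjP π' x y ∧ x + n = i ∧ y + n = j := by
  constructor
  · rintro ⟨b, hb, hi, hj, hij, hl⟩
    obtain ⟨b, hb₁, rfl⟩ := mem_shift.1 hb
    obtain ⟨x, hx, rfl⟩ := Finset.mem_image.1 hi
    obtain ⟨y, hy, rfl⟩ := Finset.mem_image.1 hj
    refine ⟨x, y, ⟨b, hb₁, hx, hy, by omega, fun l hlb hxl => ?_⟩, rfl, rfl⟩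
    have := hl (l + n) (Finset.mem_image.2 ⟨l, hlb, rfl⟩) (by omega)
    omega
  · rintro ⟨x, y, ⟨b, hb, hx, hy, hxy, hl⟩, rfl, rfl⟩
    refine ⟨_, mem_shift.2 ⟨b, hb, rfl⟩, Finset.mem_image.2 ⟨x, hx, rfl⟩,
      Finset.mem_image.2 ⟨y, hy, rfl⟩, by omega, fun l hlb hxl => ?_⟩
    obtain ⟨z, hz, rfl⟩ := Finset.mem_image.1 hlb
    have := hl z hz (by omega)
    omega

theorem mem_merge {π σ : Finset (Finset ℕ)} {m : Finset (Finset ℕ × Finset ℕ)} {c : Finset ℕ} :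
    c ∈ mergeSP π σ m ↔ (c ∈ π ∧ ∀ p ∈ m, p.1 ≠ c) ∨ (c ∈ σ ∧ ∀ p ∈ m, p.2 ≠ c) ∨
      ∃ p ∈ m, p.1 ∪ p.2 = c := by
  simp only [mergeSP, Finset.mem_union, Finset.mem_sdiff, Finset.mem_image, not_exists, not_and,
    or_assoc]

variable (h : IsSP π) (h' : IsSP π') {m : Finset (Finset ℕ × Finset ℕ)}
  (hm : MatchSP π (shiftSP (spn π) π') m)

theorem merge_old (h : IsSP π) (hm : MatchSP π (shiftSP (spn π) π') m)
    {b : Finset ℕ} (hb : b ∈ π) :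
    b ∈ mergeSP π (shiftSP (spn π) π') m ∨
      ∃ d, (b, d) ∈ m := by
  by_cases hc : ∀ p ∈ m, p.1 ≠ b
  · exact .inl (mem_merge.2 (.inl ⟨hb, hc⟩))
  · push Not at hc
    obtain ⟨⟨p, q⟩, hp, rfl⟩ := hc
    exact .inr ⟨q, hp⟩

theorem merge_new (hm : MatchSP π (shiftSP (spn π) π') m)
    {b : Finset ℕ} (hb : b ∈ shiftSP (spn π) π') :
    b ∈ mergeSP π (shiftSP (spn π) π') m ∨
      ∃ d, (d, b) ∈ m := by
  by_cases hc : ∀ p ∈ m, p.2 ≠ b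
  · exact .inl (mem_merge.2 (.inr (.inl ⟨hb, hc⟩)))
  · push Not at hc
    obtain ⟨⟨p, q⟩, hp, rfl⟩ := hc
    exact .inr ⟨p, hp⟩

theorem merge_cover (h : IsSP π) (h' : IsSP π') (hm : MatchSP π (shiftSP (spn π) π') m) (x : ℕ) :
    (∃ b ∈ mergeSP π (shiftSP (spn π) π') m, x ∈ b) ↔ 1 ≤ x ∧ x ≤ spn π + spn π' := by
  constructor
  · rintro ⟨b, hb, hx⟩
    rcases mem_merge.1 hb with ⟨hb, _⟩ | ⟨hb, _⟩ | ⟨p, hp, rfl⟩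
    · have := sp_mem h hb hx; omega
    · have := sh_gt h' hb hx; omega
    · rcases Finset.mem_union.1 hx with hx | hx
      · have := sp_mem h (hm.1 p hp).1 hx; omega
      · have := sh_gt h' (hm.1 p hp).2 hx; omega
  · rintro ⟨h1, h2⟩
    by_cases h3 : x ≤ spn π
    · obtain ⟨b, hb, hx⟩ := sp_ex h h1 h3
      rcases merge_old h hm hb with h4 | ⟨d, hd⟩
      · exact ⟨b, h4, hx⟩
      · exact ⟨b ∪ d, mem_merge.2 (.inr (.inr ⟨_, hd, rfl⟩)), Finset.mem_union_left _ hx⟩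
    · obtain ⟨b, hb, hx⟩ := sh_ex h' (not_le.1 h3) h2
      rcases merge_new hm hb with h4 | ⟨d, hd⟩
      · exact ⟨b, h4, hx⟩
      · exact ⟨d ∪ b, mem_merge.2 (.inr (.inr ⟨_, hd, rfl⟩)), Finset.mem_union_right _ hx⟩

/-- restrict a merged block to the first part -/
theorem merge_left (h : IsSP π) (h' : IsSP π') (hm : MatchSP π (shiftSP (spn π) π') m)
    {b c : Finset ℕ} (hb : b ∈ mergeSP π (shiftSP (spn π) π') m) {x : ℕ} (hx : x ∈ b)
    (hc : c ∈ π) (hxc : x ∈ c) : (b = c ∧ ∀ p ∈ m, p.1 ≠ c) ∨ ∃ d, (c, d) ∈ m ∧ b = c ∪ d := by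
  have hxN := sp_mem h hc hxc
  rcases mem_merge.1 hb with ⟨hb, hb2⟩ | ⟨hb, _⟩ | ⟨⟨p, q⟩, hp, rfl⟩
  · obtain rfl := sp_eq h hb hc hx hxc
    exact .inl ⟨rfl, hb2⟩
  · have := sh_gt h' hb hx; omega
  · rcases Finset.mem_union.1 hx with hx | hx
    · obtain rfl := sp_eq h (hm.1 _ hp).1 hc hx hxc
      exact .inr ⟨q, hp, rfl⟩
    · have := sh_gt h' (hm.1 _ hp).2 hx; omega

theorem merge_right (h : IsSP π) (h' : IsSP π') (hm : MatchSP π (shiftSP (spn π) π') m)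
    {b c : Finset ℕ} (hb : b ∈ mergeSP π (shiftSP (spn π) π') m) {x : ℕ} (hx : x ∈ b)
    (hc : c ∈ shiftSP (spn π) π') (hxc : x ∈ c) :
    (b = c ∧ ∀ p ∈ m, p.2 ≠ c) ∨ ∃ d, (d, c) ∈ m ∧ b = d ∪ c := by
  have hxN := sh_gt h' hc hxc
  rcases mem_merge.1 hb with ⟨hb, hb2⟩ | ⟨hb, hb2⟩ | ⟨⟨p, q⟩, hp, rfl⟩
  · have := sp_mem h hb hx; omega
  · obtain rfl := sh_eq h' hb hc hx hxc
    exact .inl ⟨rfl, hb2⟩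
  · rcases Finset.mem_union.1 hx with hx | hx
    · have := sp_mem h (hm.1 _ hp).1 hx; omega
    · obtain rfl := sh_eq h' (hm.1 _ hp).2 hc hx hxc
      exact .inr ⟨p, hp, rfl⟩

theorem merge_isSP (h : IsSP π) (h' : IsSP π') (hm : MatchSP π (shiftSP (spn π) π') m) :
    IsSP (mergeSP π (shiftSP (spn π) π') m) := by
  refine isSP_of _ ?_ ?_ (merge_cover h h' hm)
  · intro b hb
    rcases mem_merge.1 hb with ⟨hb, _⟩ | ⟨hb, _⟩ | ⟨p, hp, rfl⟩
    · exact sp_ne h hb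
    · exact sh_ne h' hb
    · exact (sp_ne h (hm.1 p hp).1).mono Finset.subset_union_left
  · intro b hb c hc x hxb hxc
    have hx := (merge_cover h h' hm x).1 ⟨b, hb, hxb⟩
    by_cases h3 : x ≤ spn π
    · obtain ⟨a, ha, hxa⟩ := sp_ex h hx.1 h3
      rcases merge_left h h' hm hb hxb ha hxa with ⟨rfl, h1⟩ | ⟨d, hd, rfl⟩ <;>
      rcases merge_left h h' hm hc hxc ha hxa with ⟨rfl, h2⟩ | ⟨d', hd', rfl⟩
      · rfl
      · exact absurd rfl (h1 _ hd')
      · exact absurd rfl (h2 _ hd)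
      · have := hm.2 _ hd _ hd' (.inl rfl)
        rw [(Prod.mk.inj this).2]
    · obtain ⟨a, ha, hxa⟩ := sh_ex h' (not_le.1 h3) hx.2
      rcases merge_right h h' hm hb hxb ha hxa with ⟨rfl, h1⟩ | ⟨d, hd, rfl⟩ <;>
      rcases merge_right h h' hm hc hxc ha hxa with ⟨rfl, h2⟩ | ⟨d', hd', rfl⟩
      · rfl
      · exact absurd rfl (h1 _ hd')
      · exact absurd rfl (h2 _ hd)
      · have := hm.2 _ hd _ hd' (.inr rfl)
        rw [(Prod.mk.inj this).1]

theorem merge_spn (h : IsSP π) (h' : IsSP π') (hm : MatchSP π (shiftSP (spn π) π') m) :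
    spn (mergeSP π (shiftSP (spn π) π') m) = spn π + spn π' :=
  spn_of _ (merge_cover h h' hm)

def IsMx (b : Finset ℕ) (x : ℕ) : Prop := x ∈ b ∧ ∀ y ∈ b, y ≤ x
def IsMn (b : Finset ℕ) (x : ℕ) : Prop := x ∈ b ∧ ∀ y ∈ b, x ≤ y

theorem merge_adj (h : IsSP π) (h' : IsSP π') (hm : MatchSP π (shiftSP (spn π) π') m) (i j : ℕ) :
    AdjP (mergeSP π (shiftSP (spn π) π') m) i j ↔
      AdjP π i j ∨ (∃ p ∈ m, IsMx p.1 i ∧ IsMn p.2 j) ∨ AdjP (shiftSP (spn π) π') i j := by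
  constructor
  · rintro ⟨b, hb, hi, hj, hij, hl⟩
    rcases mem_merge.1 hb with ⟨hb, _⟩ | ⟨hb, _⟩ | ⟨p, hp, rfl⟩
    · exact .inl ⟨b, hb, hi, hj, hij, hl⟩
    · exact .inr (.inr ⟨b, hb, hi, hj, hij, hl⟩)
    · have g1 := fun x => sp_mem h (hm.1 p hp).1 (x := x)
      have g2 := fun x => sh_gt h' (hm.1 p hp).2 (x := x)
      have l1 := fun l hl' => hl l (Finset.mem_union_left _ hl')
      have l2 := fun l hl' => hl l (Finset.mem_union_right _ hl')
      rcases Finset.mem_union.1 hi with hi | hi <;> rcases Finset.mem_union.1 hj with hj | hj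
      · exact .inl ⟨p.1, (hm.1 p hp).1, hi, hj, hij, l1⟩
      · refine .inr (.inl ⟨p, hp, ⟨hi, fun y hy => ?_⟩, hj, fun y hy => ?_⟩)
        · by_contra hc
          have := l1 y hy (not_le.1 hc)
          have := g1 y hy
          have := g2 j hj
          omega
        · apply l2 y hy
          have := g1 i hi
          have := g2 y hy
          omega
      · have := g1 j hj
        have := g2 i hi
        omega
      · exact .inr (.inr ⟨p.2, (hm.1 p hp).2, hi, hj, hij, l2⟩)
  · rintro (⟨b, hb, hi, hj, hij, hl⟩ | ⟨p, hp, ⟨hi, hi2⟩, hj, hj2⟩ | ⟨b, hb, hi, hj, hij, hl⟩)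
    · rcases merge_old h hm hb with h4 | ⟨d, hd⟩
      · exact ⟨b, h4, hi, hj, hij, hl⟩
      · refine ⟨b ∪ d, mem_merge.2 (.inr (.inr ⟨_, hd, rfl⟩)), Finset.mem_union_left _ hi,
          Finset.mem_union_left _ hj, hij, fun l hl' hil => ?_⟩
        rcases Finset.mem_union.1 hl' with hl' | hl'
        · exact hl l hl' hil
        · have := sp_mem h hb hj
          have := sh_gt h' (hm.1 _ hd).2 hl'
          omega
    · have e1 := sp_mem h (hm.1 _ hp).1 hi
      have e2 := sh_gt h' (hm.1 _ hp).2 hj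
      refine ⟨p.1 ∪ p.2, mem_merge.2 (.inr (.inr ⟨_, hp, rfl⟩)), Finset.mem_union_left _ hi,
          Finset.mem_union_right _ hj, by omega, fun l hl' hil => ?_⟩
      rcases Finset.mem_union.1 hl' with hl' | hl'
      · have := hi2 l hl'; omega
      · exact hj2 l hl'
    · rcases merge_new hm hb with h4 | ⟨d, hd⟩
      · exact ⟨b, h4, hi, hj, hij, hl⟩
      · refine ⟨d ∪ b, mem_merge.2 (.inr (.inr ⟨_, hd, rfl⟩)), Finset.mem_union_right _ hi,
          Finset.mem_union_right _ hj, hij, fun l hl' hil => ?_⟩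
        rcases Finset.mem_union.1 hl' with hl' | hl'
        · have := sh_gt h' hb hi
          have := sp_mem h (hm.1 _ hd).1 hl'
          omega
        · exact hl l hl' hil

noncomputable def mx (b : Finset ℕ) : ℕ := b.sup id
noncomputable def mn (b : Finset ℕ) : ℕ := sInf (b : Set ℕ)

theorem mx_spec {b : Finset ℕ} (hb : b.Nonempty) : IsMx b (mx b) := by
  refine ⟨?_, fun y hy => Finset.le_sup (f := id) hy⟩
  obtain ⟨x, hx, hx2⟩ := Finset.exists_mem_eq_sup b hb id
  rw [mx, hx2]; exact hx

theorem mn_spec {b : Finset ℕ} (hb : b.Nonempty) : IsMn b (mn b) :=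
  ⟨Nat.sInf_mem (s := (b : Set ℕ)) hb, fun _ hy => Nat.sInf_le (s := (b : Set ℕ)) hy⟩

theorem IsMx.eq {b : Finset ℕ} {x : ℕ} (hx : IsMx b x) : mx b = x :=
  have := mx_spec ⟨x, hx.1⟩
  le_antisymm (hx.2 _ this.1) (this.2 _ hx.1)

theorem IsMn.eq {b : Finset ℕ} {x : ℕ} (hx : IsMn b x) : mn b = x :=
  have := mn_spec ⟨x, hx.1⟩
  le_antisymm (this.2 _ hx.1) (hx.2 _ this.1)

theorem mem_HfUp (h : IsSP π) (x : ℕ) : x ∈ (bofSP π).HfUp ↔ ∃ b ∈ π, IsMx b x := by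
  unfold BD.HfUp
  rw [Finset.mem_sdiff, bof_up, Finset.mem_Icc]
  constructor
  · rintro ⟨⟨h1, h2⟩, h3⟩
    obtain ⟨b, hb, hx⟩ := sp_ex h h1 h2
    refine ⟨b, hb, hx, fun y hy => ?_⟩
    by_contra hc
    apply h3
    have hne : (b.filter fun l => x < l).Nonempty := ⟨y, by simp [hy, not_le.1 hc]⟩
    obtain ⟨k, hk⟩ := Finset.min_of_nonempty hne
    have hk := (min_iff b x k).1 hk
    exact Finset.mem_image.2 ⟨(x, k), (bof_ed h _).2 ⟨b, hb, hx, hk⟩, rfl⟩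
  · rintro ⟨b, hb, hx, hm⟩
    refine ⟨sp_mem h hb hx, fun hc => ?_⟩
    obtain ⟨⟨y, k⟩, hp, rfl⟩ := Finset.mem_image.1 hc
    obtain ⟨c, hc, h1, h2, h3, _⟩ := (bof_ed h _).1 hp
    obtain rfl := sp_eq h hb hc hx h1
    have := hm _ h2
    omega

theorem mem_HfDn (h : IsSP π) (x : ℕ) : x ∈ (bofSP π).HfDn ↔ ∃ b ∈ π, IsMn b x := by
  unfold BD.HfDn
  rw [Finset.mem_sdiff, bof_dn, Finset.mem_Icc]
  constructor
  · rintro ⟨⟨h1, h2⟩, h3⟩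
    obtain ⟨b, hb, hx⟩ := sp_ex h h1 h2
    refine ⟨b, hb, hx, fun y hy => ?_⟩
    by_contra hc
    apply h3
    have hne : (b.filter fun l => l < x).Nonempty := ⟨y, by simp [hy, not_le.1 hc]⟩
    have hk := mx_spec hne
    have hk1 := Finset.mem_filter.1 hk.1
    refine Finset.mem_image.2 ⟨(_, x), (bof_ed h _).2 ⟨b, hb, hk1.1, hx, hk1.2, ?_⟩, rfl⟩
    intro l hl hlt
    by_contra hc
    have := hk.2 l (Finset.mem_filter.2 ⟨hl, not_le.1 hc⟩)
    exact absurd hlt (not_lt.2 this)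
  · rintro ⟨b, hb, hx, hm⟩
    refine ⟨sp_mem h hb hx, fun hc => ?_⟩
    obtain ⟨⟨y, k⟩, hp, rfl⟩ := Finset.mem_image.1 hc
    obtain ⟨c, hc, h1, h2, h3, _⟩ := (bof_ed h _).1 hp
    obtain rfl := sp_eq h hb hc hx h2
    have := hm _ h1
    omega

theorem mem_HfDn_sh (h' : IsSP π') (n x : ℕ) :
    x ∈ (bofSP π').HfDn ↔ ∃ b ∈ shiftSP n π', IsMn b (x + n) := by
  rw [mem_HfDn h']
  constructor
  · rintro ⟨b, hb, hx, hm⟩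
    refine ⟨_, mem_shift.2 ⟨b, hb, rfl⟩, Finset.mem_image.2 ⟨x, hx, rfl⟩, fun y hy => ?_⟩
    obtain ⟨z, hz, rfl⟩ := Finset.mem_image.1 hy
    have := hm z hz
    omega
  · rintro ⟨c, hc, hx, hm⟩
    obtain ⟨b, hb, rfl⟩ := mem_shift.1 hc
    obtain ⟨y, hy, hyx⟩ := Finset.mem_image.1 hx
    obtain rfl : y = x := by simpa using hyx
    refine ⟨b, hb, hy, fun z hz => ?_⟩
    have := hm (z + n) (Finset.mem_image.2 ⟨z, hz, rfl⟩)
    omega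

def blk (π : Finset (Finset ℕ)) (x : ℕ) : Finset ℕ := (π.filter (x ∈ ·)).biUnion id

theorem blk_eq {b : Finset ℕ} (hb : b ∈ π) {x : ℕ} (hx : x ∈ b)
    (hu : ∀ c ∈ π, x ∈ c → c = b) : blk π x = b := by
  ext y
  simp only [blk, Finset.mem_biUnion, Finset.mem_filter, id]
  constructor
  · rintro ⟨c, ⟨hc, hxc⟩, hy⟩
    rwa [hu c hc hxc] at hy
  · intro hy
    exact ⟨b, ⟨hb, hx⟩, hy⟩

noncomputable def fw (n : ℕ) (p : Finset ℕ × Finset ℕ) : ℕ × ℕ := (mx p.1, mn p.2 - n)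
noncomputable def bw (n : ℕ) (π σ : Finset (Finset ℕ)) (q : ℕ × ℕ) : Finset ℕ × Finset ℕ :=
  (blk π q.1, blk σ (q.2 + n))

theorem bw_fw (h : IsSP π) (h' : IsSP π') {p : Finset ℕ × Finset ℕ} (hp1 : p.1 ∈ π)
    (hp2 : p.2 ∈ shiftSP (spn π) π') :
    bw (spn π) π (shiftSP (spn π) π') (fw (spn π) p) = p := by
  have h1 := mx_spec (sp_ne h hp1)
  have h2 := mn_spec (sh_ne h' hp2)
  have h3 := sh_gt h' hp2 h2.1
  refine Prod.ext ?_ ?_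
  · exact blk_eq hp1 h1.1 fun c hc hx => sp_eq h hc hp1 hx h1.1
  · show blk _ (mn p.2 - spn π + spn π) = _
    rw [Nat.sub_add_cancel h3.1.le]
    exact blk_eq hp2 h2.1 fun c hc hx => sh_eq h' hc hp2 hx h2.1

theorem bw_spec (h : IsSP π) (h' : IsSP π') {q : ℕ × ℕ} (h1 : q.1 ∈ (bofSP π).HfUp)
    (h2 : q.2 ∈ (bofSP π').HfDn) :
    (bw (spn π) π (shiftSP (spn π) π') q).1 ∈ π ∧
    (bw (spn π) π (shiftSP (spn π) π') q).2 ∈ shiftSP (spn π) π' ∧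
    fw (spn π) (bw (spn π) π (shiftSP (spn π) π') q) = q := by
  obtain ⟨b, hb, hx⟩ := (mem_HfUp h _).1 h1
  obtain ⟨c, hc, hy⟩ := (mem_HfDn_sh h' (spn π) _).1 h2
  have e1 : (bw (spn π) π (shiftSP (spn π) π') q).1 = b :=
    blk_eq hb hx.1 fun c hc hx' => sp_eq h hc hb hx' hx.1
  have e2 : (bw (spn π) π (shiftSP (spn π) π') q).2 = c :=
    blk_eq hc hy.1 fun d hd hx' => sh_eq h' hd hc hx' hy.1
  refine ⟨e1 ▸ hb, e2 ▸ hc, ?_⟩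
  refine Prod.ext ?_ ?_
  · show mx _ = _
    rw [e1, hx.eq]
  · show mn _ - _ = _
    rw [e2, hy.eq]; omega

theorem fw_mem (h : IsSP π) (h' : IsSP π') {p : Finset ℕ × Finset ℕ} (hp1 : p.1 ∈ π)
    (hp2 : p.2 ∈ shiftSP (spn π) π') :
    (fw (spn π) p).1 ∈ (bofSP π).HfUp ∧ (fw (spn π) p).2 ∈ (bofSP π').HfDn := by
  have h2 := mn_spec (sh_ne h' hp2)
  have h3 := sh_gt h' hp2 h2.1
  refine ⟨(mem_HfUp h _).2 ⟨_, hp1, mx_spec (sp_ne h hp1)⟩,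
    (mem_HfDn_sh h' (spn π) _).2 ⟨_, hp2, ?_⟩⟩
  show IsMn _ (mn p.2 - spn π + spn π)
  rw [Nat.sub_add_cancel h3.1.le]
  exact h2

theorem comp_ed (G G' : BD) (s : Finset (ℕ × ℕ)) : (BD.comp G G' s).ed =
    G.ed ∪ s.image (fun p => (p.1, p.2 + G.omega)) ∪
        G'.ed.image (fun p => (p.1 + G.omega, p.2 + G.omega)) := rfl

theorem comp_bof (h : IsSP π) (h' : IsSP π') (hm : MatchSP π (shiftSP (spn π) π') m) :
    BD.comp (bofSP π) (bofSP π') (m.image (fw (spn π))) =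
      bofSP (mergeSP π (shiftSP (spn π) π') m) := by
  have hlam : (BD.comp (bofSP π) (bofSP π') (m.image (fw (spn π)))).lam =
      (bofSP (mergeSP π (shiftSP (spn π) π') m)).lam := by
    show (bofSP π).lam ++ (bofSP π').lam = _
    rw [bof_lam, bof_lam, bof_lam, merge_spn h h' hm]
    simp
  have hup : (BD.comp (bofSP π) (bofSP π') (m.image (fw (spn π)))).up =
      (bofSP (mergeSP π (shiftSP (spn π) π') m)).up := by
    show (bofSP π).up ∪ (bofSP π').up.image (· + (bofSP π).omega) = _
    rw [bof_up, bof_up, bof_up, merge_spn h h' hm, bof_omega]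
    ext x
    simp only [Finset.mem_union, Finset.mem_image, Finset.mem_Icc]
    constructor
    · rintro (h1 | ⟨y, h1, rfl⟩) <;> omega
    · intro h1
      by_cases h2 : x ≤ spn π
      · exact .inl ⟨h1.1, h2⟩
      · exact .inr ⟨x - spn π, by omega, by omega⟩
  have hed : (BD.comp (bofSP π) (bofSP π') (m.image (fw (spn π)))).ed =
      (bofSP (mergeSP π (shiftSP (spn π) π') m)).ed := by
    ext ⟨i, j⟩
    rw [bof_ed (merge_isSP h h' hm), merge_adj h h' hm, sh_adj]
    rw [comp_ed, bof_omega, Finset.mem_union, Finset.mem_union, bof_ed h, or_assoc]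
    refine or_congr Iff.rfl (or_congr ?_ ?_)
    · rw [Finset.image_image, Finset.mem_image]
      constructor
      · rintro ⟨p, hp, he⟩
        obtain ⟨hp1, hp2⟩ := hm.1 p hp
        have h1 := mx_spec (sp_ne h hp1)
        have h2 := mn_spec (sh_ne h' hp2)
        have h3 := sh_gt h' hp2 h2.1
        obtain ⟨rfl, rfl⟩ := Prod.mk.inj he
        refine ⟨p, hp, h1, ?_⟩
        show IsMn _ (mn p.2 - spn π + spn π)
        rw [Nat.sub_add_cancel h3.1.le]
        exact h2
      · rintro ⟨p, hp, h1, h2⟩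
        have h3 := sh_gt h' (hm.1 p hp).2 h2.1
        refine ⟨p, hp, Prod.ext h1.eq ?_⟩
        show mn p.2 - spn π + spn π = j
        rw [h2.eq]; omega
    · simp only [Finset.mem_image, Prod.exists, bof_ed h', Prod.mk.injEq]
  have key : ∀ G G' : BD, G.lam = G'.lam → G.up = G'.up → G.dn = G'.dn → G.ed = G'.ed → G = G' := by
    rintro ⟨⟩ ⟨⟩ h1 h2 h3 h4
    simp_all
  exact key _ _ hlam hup hup hed

theorem mem_matchings (G G' : BD) (s : Finset (ℕ × ℕ)) :
    s ∈ BD.matchings G G' ↔ BD.Matching G G' s := by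
  classical
  unfold BD.matchings
  rw [Finset.mem_filter, Finset.mem_powerset]
  exact ⟨fun h => h.2, fun h => ⟨fun q hq => Finset.mem_product.2 (h.1 q hq), h⟩⟩

theorem mem_matchingsSP (π σ : Finset (Finset ℕ)) (m : Finset (Finset ℕ × Finset ℕ)) :
    m ∈ matchingsSP π σ ↔ MatchSP π σ m := by
  classical
  unfold matchingsSP
  rw [Finset.mem_filter, Finset.mem_powerset]
  exact ⟨fun h => h.2, fun h => ⟨fun q hq => Finset.mem_product.2 (h.1 q hq), h⟩⟩

theorem mul_single (π π' : SP) : phiW (mulfunSP π π') = mulfun (bD π) (bD π') := by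
  classical
  obtain ⟨π, h⟩ := π
  obtain ⟨π', h'⟩ := π'
  unfold mulfunSP mulfun
  rw [map_sum]
  refine Finset.sum_bij' (fun m _ => m.image (fw (spn π)))
    (fun s _ => s.image (bw (spn π) π (shiftSP (spn π) π'))) ?_ ?_ ?_ ?_ ?_
  · intro m hm
    have hm := (mem_matchingsSP _ _ _).1 hm
    have hmm : BD.Matching (bofSP π) (bofSP π') (m.image (fw (spn π))) := by
      refine ⟨?_, ?_, ?_⟩
      · intro q hq
        obtain ⟨p, hp, rfl⟩ := Finset.mem_image.1 hq
        exact fw_mem h h' (hm.1 p hp).1 (hm.1 p hp).2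
      · intro q hq q' hq' he
        obtain ⟨p, hp, rfl⟩ := Finset.mem_image.1 hq
        obtain ⟨p', hp', rfl⟩ := Finset.mem_image.1 hq'
        have h1 := congrArg Prod.fst (bw_fw h h' (hm.1 p hp).1 (hm.1 p hp).2)
        have h2 := congrArg Prod.fst (bw_fw h h' (hm.1 p' hp').1 (hm.1 p' hp').2)
        have : p.1 = p'.1 := by
          rw [← h1, ← h2]
          show blk _ _ = blk _ _
          rw [he]
        rw [hm.2 p hp p' hp' (.inl this)]
      · intro q hq q' hq' he
        obtain ⟨p, hp, rfl⟩ := Finset.mem_image.1 hq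
        obtain ⟨p', hp', rfl⟩ := Finset.mem_image.1 hq'
        have h1 := congrArg Prod.snd (bw_fw h h' (hm.1 p hp).1 (hm.1 p hp).2)
        have h2 := congrArg Prod.snd (bw_fw h h' (hm.1 p' hp').1 (hm.1 p' hp').2)
        have : p.2 = p'.2 := by
          rw [← h1, ← h2]
          show blk _ _ = blk _ _
          rw [he]
        rw [hm.2 p hp p' hp' (.inr this)]
    exact (mem_matchings _ _ _).2 hmm
  · intro s hs
    have hs : BD.Matching (bofSP π) (bofSP π') s := (mem_matchings _ _ _).1 hs
    have hmm : MatchSP π (shiftSP (spn π) π') (s.image (bw (spn π) π (shiftSP (spn π) π'))) := by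
      refine ⟨?_, ?_⟩
      · intro p hp
        obtain ⟨q, hq, rfl⟩ := Finset.mem_image.1 hp
        have := bw_spec h h' (hs.1 q hq).1 (hs.1 q hq).2
        exact ⟨this.1, this.2.1⟩
      · intro p hp p' hp' he
        obtain ⟨q, hq, rfl⟩ := Finset.mem_image.1 hp
        obtain ⟨q', hq', rfl⟩ := Finset.mem_image.1 hp'
        have h1 := (bw_spec h h' (hs.1 q hq).1 (hs.1 q hq).2).2.2
        have h2 := (bw_spec h h' (hs.1 q' hq').1 (hs.1 q' hq').2).2.2
        rcases he with he | he
        · have : q.1 = q'.1 := by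
            rw [← congrArg Prod.fst h1, ← congrArg Prod.fst h2]
            show mx _ = mx _
            rw [he]
          rw [hs.2.1 q hq q' hq' this]
        · have : q.2 = q'.2 := by
            rw [← congrArg Prod.snd h1, ← congrArg Prod.snd h2]
            show mn _ - _ = mn _ - _
            rw [he]
          rw [hs.2.2 q hq q' hq' this]
    exact (mem_matchingsSP _ _ _).2 hmm
  · intro m hm
    have hm := (mem_matchingsSP _ _ _).1 hm
    show (m.image _).image _ = m
    rw [Finset.image_image]
    conv_rhs => rw [← Finset.image_id (s := m)]
    apply Finset.image_congr
    intro p hp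
    exact bw_fw h h' (hm.1 p hp).1 (hm.1 p hp).2
  · intro s hs
    have hs : BD.Matching (bofSP π) (bofSP π') s := (mem_matchings _ _ _).1 hs
    show (s.image _).image _ = s
    rw [Finset.image_image]
    conv_rhs => rw [← Finset.image_id (s := s)]
    apply Finset.image_congr
    intro q hq
    exact (bw_spec h h' (hs.1 q hq).1 (hs.1 q hq).2).2.2
  · intro m hm
    have hm := (mem_matchingsSP _ _ _).1 hm
    rw [phiW_mk (merge_isSP h h' hm), ← comp_bof h h' hm]
    rfl

end prod

theorem phiW_mul (u v : WS) : phiW (mulW u v) = starB (phiW u) (phiW v) := by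
  have : mulW.compr₂ phiW = starB.compl₁₂ phiW phiW := by
    apply Finsupp.lhom_ext'
    intro π
    ext1
    apply Finsupp.lhom_ext'
    intro π'
    ext1
    simp only [LinearMap.comp_apply, Finsupp.lsingle_apply, LinearMap.compr₂_apply,
      LinearMap.compl₁₂_apply, phiW_single]
    rw [mulW, starB, liftB_single, liftW_single, liftB_single, liftW_single]
    exact mul_single π π'
  exact LinearMap.congr_fun (LinearMap.congr_fun this u) v

/-- `M_π ↦ b_π` extends to an injective morphism of bialgebras
`WSym → ℬ`; consequently the span ℬ¹₁ of the `b_π` is a sub-bialgebra of ℬ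
isomorphic to `WSym`. -/
theorem wsym_embeds_in_bspace :
    Function.Injective phiW ∧
    (∀ u v : WS, phiW (mulW u v) = starB (phiW u) (phiW v)) ∧
    phiW unitW = unitB ∧
    (∀ u : WS, TensorProduct.map phiW phiW (deltaW u) = deltaL (phiW u)) ∧
    (∀ u : WS, counitB (phiW u) = counitW u) ∧
    LinearMap.range phiW = Submodule.span ℂ {x : BSpace | ∃ π : SP, x = mkB (bofSP π.1)} := by
  exact ⟨phiW_inj, phiW_mul, phiW_unit, phiW_cop, phiW_counit, phiW_range⟩
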